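/- Let Z be a compact metric space, g : Z → Z a continuous map, and φ : Z → ℝ^k a continuous function. If the pointwise rotation set rot_p(Z,g,φ) is convex, then rot_m(Z,g,φ) = rot_p(Z,g,φ) = rot_MZ(Z,g,φ). -/

import Mathlib

open Filter Topology MeasureTheory

noncomputable def cocycle {Z : Type*} {k : ℕ} (g : Z → Z) (φ : Z → Fin k → ℝ) (z : Z) (r : ℕ) :
    Fin k → ℝ := ∑ i ∈ Finset.range r, φ (g^[i] z)

/-- The Birkhoff average of `φ` along the `g`-orbit of `z` exists and equals `v`. -/
def hasAvg {Z : Type*} {k : ℕ} (g : Z → Z) (φ : Z → Fin k → ℝ) (z : Z) (v : Fin k → ℝ) : Prop :=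
  Tendsto (fun r : ℕ => (r : ℝ)⁻¹ • cocycle g φ z r) atTop (nhds v)

/-- The pointwise rotation set. -/
def rotP {Z : Type*} {k : ℕ} (g : Z → Z) (φ : Z → Fin k → ℝ) : Set (Fin k → ℝ) :=
  {v | ∃ z, hasAvg g φ z v}

/-- The pointwise rotation set of points in a subset `W`. -/
def rotPOn {Z : Type*} {k : ℕ} (g : Z → Z) (φ : Z → Fin k → ℝ) (W : Set Z) : Set (Fin k → ℝ) :=
  {v | ∃ z ∈ W, hasAvg g φ z v}

/-- The Misiurewicz–Ziemian rotation set. -/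
def rotMZ {Z : Type*} {k : ℕ} (g : Z → Z) (φ : Z → Fin k → ℝ) : Set (Fin k → ℝ) :=
  {v | ∃ (z : ℕ → Z) (r : ℕ → ℕ), Tendsto r atTop atTop ∧
    Tendsto (fun i => (r i : ℝ)⁻¹ • cocycle g φ (z i) (r i)) atTop (nhds v)}

/-- The measure rotation set. -/
def rotM {Z : Type*} [MeasurableSpace Z] {k : ℕ} (g : Z → Z) (φ : Z → Fin k → ℝ) :
    Set (Fin k → ℝ) :=
  {v | ∃ μ : Measure Z, IsProbabilityMeasure μ ∧ MeasurePreserving g μ μ ∧ (∫ z, φ z ∂μ) = v}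

/-- The set of recurrent points of `g`. -/
def RecSet {Z : Type*} [TopologicalSpace Z] (g : Z → Z) : Set Z :=
  {z | ∃ r : ℕ → ℕ, Tendsto r atTop atTop ∧ Tendsto (fun i => g^[r i] z) atTop (nhds z)}

/-- In finite dimension, the mean of a function with values in a convex set lies in that set. -/
theorem aux_mean_mem {Ω : Type*} [MeasurableSpace Ω] (μ : Measure Ω) [IsProbabilityMeasure μ]
    (n : ℕ) : ∀ (E : Type) [NormedAddCommGroup E] [NormedSpace ℝ E] [FiniteDimensional ℝ E]
      (C : Set E) (f : Ω → E), Module.finrank ℝ E = n → Convex ℝ C → Integrable f μ →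
      (∀ᵐ x ∂μ, f x ∈ C) → ∫ x, f x ∂μ ∈ C := by
  induction n using Nat.strong_induction_on with
  | _ n ih =>
  intro E _ _ _ C f hn hC hf hfC
  by_contra hm
  set m := ∫ x, f x ∂μ with hmdef
  have hcomp : CompleteSpace E := FiniteDimensional.complete ℝ E
  have hne : C.Nonempty := by
    obtain ⟨x, hx⟩ := hfC.exists
    exact ⟨_, hx⟩
  have key : ∃ l : E →L[ℝ] ℝ, l ≠ 0 ∧ ∀ᵐ x ∂μ, l (f x) = l m := by
    by_cases hspan : affineSpan ℝ C = ⊤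
    · have hint := hC.interior_nonempty_iff_affineSpan_eq_top.2 hspan
      obtain ⟨l, hl⟩ := geometric_hahn_banach_open_point hC.interior isOpen_interior
        (fun h => hm (interior_subset h))
      have hl' : ∀ a ∈ C, l a ≤ l m := by
        intro a ha
        have h1 : a ∈ closure (interior C) := by
          rw [hC.closure_interior_eq_closure_of_nonempty_interior hint]
          exact subset_closure ha
        have h2 : closure (interior C) ⊆ {a | l a ≤ l m} :=
          closure_minimal (fun a ha => (hl a ha).le) (isClosed_le l.continuous continuous_const)
        exact h2 h1
      refine ⟨l, ?_, ?_⟩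
      · rintro rfl
        obtain ⟨a, ha⟩ := hint
        simpa using hl a ha
      · have hi : Integrable (fun x => l m - l (f x)) μ :=
          (integrable_const _).sub (l.integrable_comp hf)
        have h0 : ∫ x, (l m - l (f x)) ∂μ = 0 := by
          rw [integral_sub (integrable_const _) (l.integrable_comp hf),
            l.integral_comp_comm hf]
          simp [hmdef]
        rw [integral_eq_zero_iff_of_nonneg_ae _ hi] at h0
        · filter_upwards [h0] with x hx
          simp at hx
          linarith
        · filter_upwards [hfC] with x hx
          simpa using hl' _ hx
    · have hdir : (affineSpan ℝ C).direction < ⊤ := by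
        rw [lt_top_iff_ne_top, Ne, AffineSubspace.direction_eq_top_iff_of_nonempty]
        · exact hspan
        · exact (affineSpan_nonempty ℝ).2 hne
      obtain ⟨l, hl0, hl⟩ := Submodule.exists_le_ker_of_lt_top _ hdir
      obtain ⟨c, hc⟩ := hne
      have hconst : ∀ a ∈ C, l a = l c := by
        intro a ha
        have : a - c ∈ (affineSpan ℝ C).direction := by
          simpa using AffineSubspace.vsub_mem_direction (subset_affineSpan ℝ C ha)
            (subset_affineSpan ℝ C hc)
        have := hl this
        rw [LinearMap.mem_ker, map_sub] at this
        linarith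
      have hae : ∀ᵐ x ∂μ, l (f x) = l c := hfC.mono fun x hx => hconst _ hx
      refine ⟨LinearMap.toContinuousLinearMap l, ?_, ?_⟩
      · intro h
        apply hl0
        simpa using h
      · have h1 : l m = l c := by
          have := (LinearMap.toContinuousLinearMap l).integral_comp_comm hf
          simp only [LinearMap.coe_toContinuousLinearMap'] at this
          rw [hmdef, ← this, integral_congr_ae hae]
          simp
        filter_upwards [hae] with x hx
        simp [hx, h1]
  obtain ⟨l, hl0, hl⟩ := key
  let K : Submodule ℝ E := LinearMap.ker l.toLinearMap
  obtain ⟨P0, hP0⟩ := LinearMap.exists_leftInverse_of_injective K.subtype (by simp)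
  let P : E →L[ℝ] K := LinearMap.toContinuousLinearMap P0
  have hP : ∀ y : K, P (y : E) = y := fun y => by
    have := LinearMap.congr_fun hP0 y
    simpa [P] using this
  have hlt : Module.finrank ℝ K < n := by
    rw [← hn]
    apply Submodule.finrank_lt
    intro h
    apply hl0
    ext x
    have : x ∈ K := by rw [h]; trivial
    simpa [K] using this
  have hC' : Convex ℝ {y : K | m + (y : E) ∈ C} := by
    have := (hC.translate_preimage_right m).linear_preimage K.subtype
    simpa [Set.preimage] using this
  have hfm : Integrable (fun x => f x - m) μ := hf.sub (integrable_const _)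
  have := ih _ hlt K {y : K | m + (y : E) ∈ C} (fun x => P (f x - m)) rfl hC'
    (P.integrable_comp hfm) (by
      filter_upwards [hfC, hl] with x hx hlx
      have hk : f x - m ∈ K := by simp [K, hlx]
      have := hP ⟨_, hk⟩
      change m + ((P (f x - m) : K) : E) ∈ C
      rw [this]
      simpa using hx)
  rw [P.integral_comp_comm hfm, integral_sub hf (integrable_const _)] at this
  simp [← hmdef] at this
  exact hm this

/-- The running maximum of Garsia. -/
noncomputable def auxM {Z : Type*} (T : Z → Z) (f : Z → ℝ) : ℕ → Z → ℝ
  | 0 => fun _ => 0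
  | n + 1 => fun x => max 0 (f x + auxM T f n (T x))

theorem auxM_nonneg {Z : Type*} (T : Z → Z) (f : Z → ℝ) (n : ℕ) (x : Z) : 0 ≤ auxM T f n x := by
  cases n <;> simp [auxM]

theorem auxM_mono {Z : Type*} (T : Z → Z) (f : Z → ℝ) (n : ℕ) :
    ∀ x, auxM T f n x ≤ auxM T f (n + 1) x := by
  induction n with
  | zero => intro x; simp [auxM]
  | succ n ih =>
    intro x
    rw [auxM, auxM]
    exact max_le_max le_rfl (by linarith [ih (T x)])

theorem auxM_ge {Z : Type*} (T : Z → Z) (f : Z → ℝ) (n : ℕ) :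
    ∀ x, birkhoffSum T f n x ≤ auxM T f n x := by
  induction n with
  | zero => intro x; simp [auxM]
  | succ n ih =>
    intro x
    rw [auxM, birkhoffSum_succ']
    exact le_max_of_le_right (by linarith [ih (T x)])

theorem auxM_meas {Z : Type*} [MeasurableSpace Z] {T : Z → Z} {f : Z → ℝ} (hT : Measurable T)
    (hf : Measurable f) (n : ℕ) : Measurable (auxM T f n) := by
  induction n with
  | zero => exact measurable_const
  | succ n ih => exact measurable_const.max (hf.add (ih.comp hT))

theorem auxM_int {Z : Type*} [MeasurableSpace Z] {μ : Measure Z} [IsProbabilityMeasure μ]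
    {T : Z → Z} {f : Z → ℝ} (hT : MeasurePreserving T μ μ)
    (hf : Integrable f μ) (n : ℕ) : Integrable (auxM T f n) μ := by
  induction n with
  | zero => exact integrable_const _
  | succ n ih => exact (integrable_const (0:ℝ)).sup (hf.add (hT.integrable_comp_of_integrable ih))

theorem aux_max {Z : Type*} [MeasurableSpace Z] {μ : Measure Z} [IsProbabilityMeasure μ]
    {T : Z → Z} {f : Z → ℝ} (hT : MeasurePreserving T μ μ)
    (hfm : Measurable f) (hf : Integrable f μ) 
    (h : ∀ x, f x = 0 ∨ ∃ n, 0 < birkhoffSum T f n x) : 0 ≤ ∫ x, f x ∂μ := by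
  have hmeas : ∀ n, MeasurableSet {x | 0 < auxM T f n x} := fun n =>
    measurableSet_lt measurable_const (auxM_meas hT.measurable hfm n)
  have h1 : ∀ n, 0 ≤ ∫ x, ({x | 0 < auxM T f (n+1) x}).indicator f x ∂μ := by
    intro n
    have i0 := auxM_int hT hf n
    have i1 := auxM_int hT hf (n+1)
    have i2 : Integrable (fun x => auxM T f n (T x)) μ := hT.integrable_comp_of_integrable i0
    have e : ∫ x, auxM T f n (T x) ∂μ = ∫ x, auxM T f n x ∂μ := by
      have := integral_map (μ := μ) hT.measurable.aemeasurable (f := auxM T f n)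
        (auxM_meas hT.measurable hfm n).aestronglyMeasurable
      rw [hT.map_eq] at this
      exact this.symm
    calc (0:ℝ) ≤ ∫ x, auxM T f (n+1) x ∂μ - ∫ x, auxM T f n x ∂μ := by
          rw [sub_nonneg]
          exact integral_mono i0 i1 (auxM_mono T f n)
      _ = ∫ x, (auxM T f (n+1) x - auxM T f n (T x)) ∂μ := by
          rw [integral_sub i1 i2, e]
      _ ≤ _ := by
          apply integral_mono (i1.sub i2) (hf.indicator (hmeas _))
          intro x
          by_cases hx : 0 < auxM T f (n+1) x
          · rw [Set.indicator_of_mem (show x ∈ {x | 0 < auxM T f (n+1) x} from hx)]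
            change auxM T f (n+1) x - auxM T f n (T x) ≤ f x
            have hrec : auxM T f (n+1) x = max 0 (f x + auxM T f n (T x)) := rfl
            rw [hrec] at hx ⊢
            rcases le_total (f x + auxM T f n (T x)) 0 with h | h
            · rw [max_eq_left h] at hx; exact absurd hx (lt_irrefl _)
            · rw [max_eq_right h]; linarith
          · rw [Set.indicator_of_notMem (show x ∉ {x | 0 < auxM T f (n+1) x} from hx)]
            change auxM T f (n+1) x - auxM T f n (T x) ≤ 0
            linarith [auxM_nonneg T f n (T x)]
  refine ge_of_tendsto' (tendsto_integral_of_dominated_convergence (fun x => |f x|)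
    (F := fun n x => ({x | 0 < auxM T f (n+1) x}).indicator f x)
    (fun n => (hf.indicator (hmeas _)).aestronglyMeasurable) hf.abs ?_ ?_) h1
  · intro n
    refine ae_of_all _ fun x => ?_
    exact norm_indicator_le_norm_self _ _
  · refine ae_of_all _ fun x => ?_
    rcases h x with h0 | ⟨N, hN⟩
    · have : ∀ n, ({x | 0 < auxM T f (n+1) x}).indicator f x = f x := fun n => by
        simp [Set.indicator, h0]
      simp only [this]
      exact tendsto_const_nhds
    · refine tendsto_const_nhds.congr' ?_
      filter_upwards [eventually_ge_atTop N] with n hn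
      have hmono : Monotone fun n => auxM T f n x := monotone_nat_of_le_succ (fun n => auxM_mono T f n x)
      have : 0 < auxM T f (n+1) x :=
        (hN.trans_le (auxM_ge T f N x)).trans_le (hmono (by omega))
      simp [Set.indicator, this]

/-- Points whose upper Birkhoff average exceeds `b`. -/
def auxU {Z : Type*} (T : Z → Z) (f : Z → ℝ) (b : ℝ) : Set Z :=
  {x | ∃ m : ℕ, ∀ N : ℕ, ∃ n : ℕ, N ≤ n ∧ b + 1 / ((m:ℝ) + 1) < birkhoffAverage ℝ T f n x}

theorem aux_bsum_meas {Z : Type*} [MeasurableSpace Z] {T : Z → Z} {f : Z → ℝ} (hT : Measurable T)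
    (hf : Measurable f) (n : ℕ) : Measurable (birkhoffSum T f n) := by
  unfold birkhoffSum
  exact Finset.measurable_sum _ fun i _ => hf.comp (hT.iterate i)

theorem aux_bavg_meas {Z : Type*} [MeasurableSpace Z] {T : Z → Z} {f : Z → ℝ} (hT : Measurable T)
    (hf : Measurable f) (n : ℕ) : Measurable (birkhoffAverage ℝ T f n) := by
  unfold birkhoffAverage
  exact (aux_bsum_meas hT hf n).const_mul ((n:ℝ)⁻¹)

theorem auxU_meas {Z : Type*} [MeasurableSpace Z] {T : Z → Z} {f : Z → ℝ} (hT : Measurable T)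
    (hf : Measurable f) (b : ℝ) : MeasurableSet (auxU T f b) := by
  have : auxU T f b = ⋃ m : ℕ, ⋂ N : ℕ, ⋃ n : ℕ, ⋃ _ : N ≤ n,
      {x | b + 1 / ((m:ℝ) + 1) < birkhoffAverage ℝ T f n x} := by
    ext x; simp [auxU]
  rw [this]
  exact MeasurableSet.iUnion fun m => MeasurableSet.iInter fun N => MeasurableSet.iUnion fun n =>
    MeasurableSet.iUnion fun _ => measurableSet_lt measurable_const (aux_bavg_meas hT hf n)

theorem auxU_inv {Z : Type*} {T : Z → Z} {f : Z → ℝ} (hb : Bornology.IsBounded (Set.range f))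
    (b : ℝ) {x : Z} (hx : x ∈ auxU T f b) : T x ∈ auxU T f b := by
  obtain ⟨m, hm⟩ := hx
  obtain ⟨m', hm'⟩ := exists_nat_one_div_lt (K := ℝ) (ε := 1 / ((m:ℝ) + 1)) (by positivity)
  have ht := tendsto_birkhoffAverage_apply_sub_birkhoffAverage' ℝ hb T x
  have hev := ht.eventually (lt_mem_nhds
    (show -(1 / ((m:ℝ) + 1) - 1 / ((m':ℝ) + 1)) < 0 by linarith))
  obtain ⟨N0, hN0⟩ := eventually_atTop.1 hev
  refine ⟨m', fun N => ?_⟩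
  obtain ⟨n, hn, hlt⟩ := hm (max N N0)
  refine ⟨n, (le_max_left _ _).trans hn, ?_⟩
  have := hN0 n ((le_max_right _ _).trans hn)
  linarith

theorem auxU_sum {Z : Type*} {T : Z → Z} {f : Z → ℝ} {b : ℝ} {x : Z} (hx : x ∈ auxU T f b) :
    ∃ n : ℕ, (n:ℝ) * b < birkhoffSum T f n x := by
  obtain ⟨m, hm⟩ := hx
  obtain ⟨n, hn, hlt⟩ := hm 1
  refine ⟨n, ?_⟩
  have hpos : (0:ℝ) < n := by exact_mod_cast hn
  have h1 : b < (n:ℝ)⁻¹ * birkhoffSum T f n x := by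
    have : (0:ℝ) < 1 / ((m:ℝ) + 1) := by positivity
    have h2 : birkhoffAverage ℝ T f n x = (n:ℝ)⁻¹ * birkhoffSum T f n x := rfl
    linarith
  rw [inv_mul_eq_div, lt_div_iff₀ hpos] at h1
  linarith

theorem aux_int_ge {Z : Type*} [MeasurableSpace Z] {μ : Measure Z} [IsProbabilityMeasure μ]
    {T : Z → Z} {f : Z → ℝ} (hT : MeasurePreserving T μ μ)
    (hfm : Measurable f) (hf : Integrable f μ) (b : ℝ) (B : Set Z) (hB : MeasurableSet B)
    (hinv : ∀ x ∈ B, T x ∈ B) (hU : B ⊆ auxU T f b) :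
    0 ≤ ∫ x, B.indicator (fun x => f x - b) x ∂μ := by
  refine aux_max hT ((hfm.sub_const b).indicator hB)
    ((hf.sub (integrable_const b)).indicator hB) fun x => ?_
  by_cases hx : x ∈ B
  · right
    obtain ⟨n, hn⟩ := auxU_sum (hU hx)
    refine ⟨n, ?_⟩
    have hit : ∀ i, T^[i] x ∈ B := by
      intro i
      induction i with
      | zero => exact hx
      | succ i ih => rw [Function.iterate_succ_apply']; exact hinv _ ih
    have : birkhoffSum T (B.indicator (fun x => f x - b)) n x = birkhoffSum T f n x - n * b := by
      simp [birkhoffSum, Set.indicator, hit]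
    rw [this]; linarith
  · left; simp [hx]

theorem auxU_of_freq {Z : Type*} {T : Z → Z} {f : Z → ℝ} {b b' : ℝ} (hb : b < b') {x : Z}
    (hx : ∃ᶠ n in atTop, b' < birkhoffAverage ℝ T f n x) : x ∈ auxU T f b := by
  obtain ⟨m, hm⟩ := exists_nat_one_div_lt (K := ℝ) (ε := b' - b) (by linarith)
  refine ⟨m, fun N => ?_⟩
  obtain ⟨n, hn, h⟩ := frequently_atTop.1 hx N
  exact ⟨n, hn, by linarith⟩

theorem aux_cross {Z : Type*} [MeasurableSpace Z] {μ : Measure Z} [IsProbabilityMeasure μ]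
    {T : Z → Z} {f : Z → ℝ} (hT : MeasurePreserving T μ μ)
    (hfm : Measurable f) (hb : Bornology.IsBounded (Set.range f)) (hf : Integrable f μ)
    {a b : ℝ} (hab : a < b) : μ (auxU T f b ∩ auxU T (-f) (-a)) = 0 := by
  set B := auxU T f b ∩ auxU T (-f) (-a) with hBdef
  have hb' : Bornology.IsBounded (Set.range (-f)) := by
    have : Set.range (-f) = - Set.range f := by
      ext y; simp [neg_eq_iff_eq_neg]
    rw [this]; exact hb.neg
  have hB : MeasurableSet B := (auxU_meas hT.measurable hfm b).inter
    (auxU_meas hT.measurable hfm.neg _)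
  have hinv : ∀ x ∈ B, T x ∈ B := fun x hx => ⟨auxU_inv hb b hx.1, auxU_inv hb' _ hx.2⟩
  have h1 := aux_int_ge hT hfm hf b B hB hinv Set.inter_subset_left
  have h2 := aux_int_ge hT hfm.neg hf.neg (-a) B hB hinv Set.inter_subset_right
  have i1 : Integrable (B.indicator fun x => f x - b) μ :=
    (hf.sub (integrable_const b)).indicator hB
  have i2 : Integrable (B.indicator fun x => (-f) x - (-a)) μ :=
    (hf.neg.sub (integrable_const (-a))).indicator hB
  have h3 := add_nonneg h1 h2
  rw [← integral_add i1 i2] at h3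
  have h4 : (fun x => B.indicator (fun x => f x - b) x + B.indicator (fun x => (-f) x - (-a)) x)
      = B.indicator (fun _ => a - b) := by
    ext x
    by_cases hx : x ∈ B
    · simp [hx]; ring
    · simp [hx]
  rw [h4, integral_indicator_const _ hB, smul_eq_mul] at h3
  have h5 : μ.real B = 0 := by
    have : 0 ≤ μ.real B := measureReal_nonneg
    nlinarith
  simpa [Measure.real, ENNReal.toReal_eq_zero_iff] using h5

theorem aux_bavg_bound {Z : Type*} {E : Type*} [NormedAddCommGroup E] [NormedSpace ℝ E]
    {T : Z → Z} {f : Z → E} {C : ℝ} (hC : ∀ x, ‖f x‖ ≤ C) (n : ℕ) (x : Z) :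
    ‖birkhoffAverage ℝ T f n x‖ ≤ C := by
  have hC0 : 0 ≤ C := (norm_nonneg _).trans (hC x)
  rcases Nat.eq_zero_or_pos n with rfl | hn
  · simpa using hC0
  have hpos : (0:ℝ) < n := by exact_mod_cast hn
  have h1 : ‖birkhoffSum T f n x‖ ≤ n * C := by
    have := norm_sum_le_of_le (Finset.range n) (f := fun i => f (T^[i] x)) (fun i _ => hC _)
    simpa [birkhoffSum] using this
  rw [birkhoffAverage, norm_smul, norm_inv, Real.norm_natCast, inv_mul_eq_div, div_le_iff₀ hpos]
  linarith

/-- Birkhoff's pointwise ergodic theorem for bounded functions. -/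
theorem aux_birkhoff {Z : Type*} [MeasurableSpace Z] {μ : Measure Z} [IsProbabilityMeasure μ]
    {T : Z → Z} {f : Z → ℝ} (hT : MeasurePreserving T μ μ)
    (hfm : Measurable f) (C : ℝ) (hC : ∀ x, ‖f x‖ ≤ C) :
    ∀ᵐ x ∂μ, ∃ c, Tendsto (fun n => birkhoffAverage ℝ T f n x) atTop (𝓝 c) := by
  have hb : Bornology.IsBounded (Set.range f) := by
    refine (Metric.isBounded_closedBall (x := (0:ℝ)) (r := C)).subset ?_
    rintro _ ⟨x, rfl⟩
    simpa using hC x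
  have hf : Integrable f μ := Integrable.of_bound hfm.aestronglyMeasurable C (ae_of_all _ hC)
  have h : ∀ᵐ x ∂μ, ∀ p q : ℚ, p < q → x ∉ auxU T f q ∩ auxU T (-f) (-p) := by
    rw [ae_all_iff]; intro p
    rw [ae_all_iff]; intro q
    by_cases hpq : p < q
    · have := aux_cross hT hfm hb hf (a := p) (b := q) (by exact_mod_cast hpq)
      filter_upwards [measure_eq_zero_iff_ae_notMem.1 this] with x hx _ using hx
    · exact ae_of_all _ fun x h => absurd h hpq
  filter_upwards [h] with x hx
  have hbd : ∀ n, |birkhoffAverage ℝ T f n x| ≤ C := fun n => aux_bavg_bound hC n x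
  refine tendsto_of_no_upcrossings (s := Set.univ) dense_univ ?_
    (isBoundedUnder_of ⟨C, fun n => (abs_le.1 (hbd n)).2⟩)
    (isBoundedUnder_of ⟨-C, fun n => (abs_le.1 (hbd n)).1⟩)
  rintro a - b - hab ⟨ha, hb⟩
  obtain ⟨p, hp1, hp2⟩ := exists_rat_btwn hab
  obtain ⟨q, hq1, hq2⟩ := exists_rat_btwn hp2
  refine hx p q (by exact_mod_cast hq1) ⟨auxU_of_freq hq2 hb, ?_⟩
  refine auxU_of_freq (b' := -a) (by linarith) (ha.mono fun n hn => ?_)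
  have : birkhoffAverage ℝ T (-f) n x = - birkhoffAverage ℝ T f n x := by
    simp [birkhoffAverage, birkhoffSum]
  linarith

theorem aux_M_sub_P {Z : Type*} [MetricSpace Z] [CompactSpace Z] [MeasurableSpace Z] [BorelSpace Z]
    {k : ℕ} (g : Z → Z) (hg : Continuous g) (φ : Z → Fin k → ℝ) (hφ : Continuous φ)
    (hconv : Convex ℝ (rotP g φ)) : rotM g φ ⊆ rotP g φ := by
  rintro v ⟨μ, hμ, hT, rfl⟩
  obtain ⟨C, hC⟩ : ∃ C, ∀ x, ‖φ x‖ ≤ C := by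
    obtain ⟨C, hC⟩ := isCompact_univ.exists_bound_of_continuousOn hφ.continuousOn
    exact ⟨C, fun x => hC x trivial⟩
  have hCi : ∀ i x, ‖φ x i‖ ≤ C := fun i x => (norm_le_pi_norm _ i).trans (hC x)
  have hm : ∀ i, Measurable fun x => φ x i := fun i =>
    ((continuous_apply i).comp hφ).measurable
  have hae : ∀ᵐ x ∂μ, ∀ i, ∃ c,
      Tendsto (fun n => birkhoffAverage ℝ g (fun x => φ x i) n x) atTop (𝓝 c) :=
    ae_all_iff.2 fun i => aux_birkhoff hT (hm i) C (hCi i)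
  have hae2 : ∀ᵐ x ∂μ, ∃ w, hasAvg g φ x w := by
    filter_upwards [hae] with x hx
    choose w hw using hx
    refine ⟨w, tendsto_pi_nhds.2 fun i => ?_⟩
    refine (hw i).congr fun n => ?_
    simp [birkhoffAverage, birkhoffSum, cocycle]
  classical
  let F : Z → Fin k → ℝ := fun x => if h : ∃ w, hasAvg g φ x w then h.choose else 0
  have hF : ∀ᵐ x ∂μ, hasAvg g φ x (F x) := by
    filter_upwards [hae2] with x hx
    simp only [F, hx, dif_pos]
    exact hx.choose_spec
  have hφi : Integrable φ μ := Integrable.of_bound hφ.aestronglyMeasurable C (ae_of_all _ hC)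
  have hcont : ∀ n, Continuous fun x => birkhoffAverage ℝ g φ n x := by
    intro n
    unfold birkhoffAverage birkhoffSum
    exact (continuous_finsetSum _ fun i _ => hφ.comp (hg.iterate i)).const_smul ((n:ℝ)⁻¹)
  have hF' : ∀ᵐ x ∂μ, Tendsto (fun n => birkhoffAverage ℝ g φ n x) atTop (𝓝 (F x)) := hF
  have hFm : AEStronglyMeasurable F μ :=
    aestronglyMeasurable_of_tendsto_ae atTop (fun n => (hcont n).aestronglyMeasurable) hF'
  have hFb : ∀ᵐ x ∂μ, ‖F x‖ ≤ C := by
    filter_upwards [hF'] with x hx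
    exact le_of_tendsto' hx.norm fun n => aux_bavg_bound hC n x
  have hFi : Integrable F μ := Integrable.of_bound hFm C hFb
  have hlim := tendsto_integral_of_dominated_convergence (μ := μ) (fun _ => C)
    (fun n => (hcont n).aestronglyMeasurable) (integrable_const C)
    (fun n => ae_of_all _ fun x => aux_bavg_bound (T := g) hC n x) hF'
  have hint : ∀ i, ∫ x, φ (g^[i] x) ∂μ = ∫ x, φ x ∂μ := by
    intro i
    have hTi := hT.iterate i
    have := integral_map (μ := μ) hTi.measurable.aemeasurable (f := φ)
      hφ.aestronglyMeasurable
    rw [hTi.map_eq] at this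
    exact this.symm
  have hconst : ∀ᶠ n : ℕ in atTop, ∫ x, birkhoffAverage ℝ g φ n x ∂μ = ∫ x, φ x ∂μ := by
    filter_upwards [eventually_gt_atTop 0] with n hn
    have hn' : (n:ℝ) ≠ 0 := by exact_mod_cast hn.ne'
    unfold birkhoffAverage birkhoffSum
    rw [integral_smul, integral_finsetSum (f := fun i x => φ (g^[i] x)) _ (fun i _ =>
      (hT.iterate i).integrable_comp_of_integrable hφi)]
    simp only [hint, Finset.sum_const, Finset.card_range]
    rw [← Nat.cast_smul_eq_nsmul ℝ, smul_smul, inv_mul_cancel₀ hn', one_smul]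
  have heq : ∫ x, F x ∂μ = ∫ x, φ x ∂μ :=
    tendsto_nhds_unique hlim (tendsto_const_nhds.congr' (hconst.mono fun n h => h.symm))
  rw [← heq]
  exact aux_mean_mem μ _ (Fin k → ℝ) (rotP g φ) F rfl hconv hFi (hF.mono fun x hx => ⟨x, hx⟩)

theorem aux_emp {Z : Type*} [MetricSpace Z] [CompactSpace Z] [MeasurableSpace Z] [BorelSpace Z]
    (g : Z → Z) (z : Z) (r : ℕ) : ∃ ν : ProbabilityMeasure Z, 0 < r → ∀ h : Z → ℝ, Continuous h →
      ∫ x, h x ∂(ν : Measure Z) = birkhoffAverage ℝ g h r z := by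
  rcases Nat.eq_zero_or_pos r with rfl | hr
  · exact ⟨⟨Measure.dirac z, inferInstance⟩, fun h => absurd h (lt_irrefl _)⟩
  refine ⟨⟨(r : ENNReal)⁻¹ • ∑ i ∈ Finset.range r, Measure.dirac (g^[i] z), ⟨?_⟩⟩, fun _ h hh => ?_⟩
  · simp
    exact ENNReal.inv_mul_cancel (by exact_mod_cast hr.ne') (by simp)
  · simp only [ProbabilityMeasure.coe_mk]
    rw [integral_smul_measure, integral_finsetSum_measure]
    · simp [birkhoffAverage, birkhoffSum]
    · intro i _
      exact integrable_dirac (by simp)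

theorem aux_MZ_sub_M {Z : Type*} [MetricSpace Z] [CompactSpace Z] [MeasurableSpace Z]
    [BorelSpace Z] {k : ℕ} (g : Z → Z) (hg : Continuous g) (φ : Z → Fin k → ℝ)
    (hφ : Continuous φ) : rotMZ g φ ⊆ rotM g φ := by
  rintro v ⟨z, r, hr, hv⟩
  choose ν hν using fun i => aux_emp g (z i) (r i)
  let U : Ultrafilter ℕ := Filter.hyperfilter ℕ
  have hU : (U : Filter ℕ) ≤ atTop := by
    rw [← Nat.cofinite_eq_atTop]; exact Filter.hyperfilter_le_cofinite
  let μ : ProbabilityMeasure Z := (U.map ν).lim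
  have hlim : Tendsto ν U (𝓝 μ) := (U.map ν).le_nhds_lim
  have hI := ProbabilityMeasure.tendsto_iff_forall_integral_tendsto.1 hlim
  have hpos : ∀ᶠ i in (U : Filter ℕ), 0 < r i := (hr.mono_left hU).eventually_gt_atTop 0
  have hI' : ∀ h : Z → ℝ, Continuous h →
      Tendsto (fun i => birkhoffAverage ℝ g h (r i) (z i)) U (𝓝 (∫ x, h x ∂(μ : Measure Z))) := by
    intro h hh
    refine (hI (BoundedContinuousFunction.mkOfCompact ⟨h, hh⟩)).congr' ?_
    filter_upwards [hpos] with i hi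
    exact hν i hi h hh
  have hinv : ∀ h : Z → ℝ, Continuous h →
      ∫ x, h (g x) ∂(μ : Measure Z) = ∫ x, h x ∂(μ : Measure Z) := by
    intro h hh
    have h1 := hI' h hh
    have h2 := hI' (fun x => h (g x)) (hh.comp hg)
    obtain ⟨C, hC⟩ := isCompact_univ.exists_bound_of_continuousOn hh.continuousOn
    have h3 : Tendsto (fun i => birkhoffAverage ℝ g (fun x => h (g x)) (r i) (z i)
        - birkhoffAverage ℝ g h (r i) (z i)) U (𝓝 0) := by
      have h4 : Tendsto (fun i => 2 * C / (r i : ℝ)) U (𝓝 0) :=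
        tendsto_const_nhds.div_atTop (tendsto_natCast_atTop_atTop.comp (hr.mono_left hU))
      refine squeeze_zero_norm (fun i => ?_) h4
      have e : birkhoffAverage ℝ g (fun x => h (g x)) (r i) (z i)
          = birkhoffAverage ℝ g h (r i) (g (z i)) := by
        simp only [birkhoffAverage, birkhoffSum, ← Function.iterate_succ_apply' g,
          ← Function.iterate_succ_apply g]
      rw [e, ← dist_eq_norm, dist_birkhoffAverage_apply_birkhoffAverage]
      gcongr
      rw [dist_eq_norm]
      refine (norm_sub_le _ _).trans ?_
      linarith [hC (g^[r i] (z i)) trivial, hC (z i) trivial]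
    have := tendsto_nhds_unique (h2.sub h1) h3
    linarith
  have hmap : Measure.map g (μ : Measure Z) = μ := by
    have : IsProbabilityMeasure (Measure.map g (μ : Measure Z)) :=
      Measure.isProbabilityMeasure_map hg.measurable.aemeasurable
    refine ext_of_forall_integral_eq_of_IsFiniteMeasure fun f => ?_
    rw [integral_map hg.measurable.aemeasurable f.continuous.aestronglyMeasurable]
    exact hinv f f.continuous
  refine ⟨μ, inferInstance, ⟨hg.measurable, hmap⟩, ?_⟩
  have hφi : Integrable φ (μ : Measure Z) := by
    obtain ⟨C, hC⟩ := isCompact_univ.exists_bound_of_continuousOn hφ.continuousOn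
    exact Integrable.of_bound hφ.aestronglyMeasurable C (ae_of_all _ fun x => hC x trivial)
  ext j
  have hj : (∫ x, φ x ∂(μ : Measure Z)) j = ∫ x, φ x j ∂(μ : Measure Z) :=
    ((ContinuousLinearMap.proj (R := ℝ) (φ := fun _ : Fin k => ℝ) j).integral_comp_comm hφi).symm
  rw [hj]
  refine tendsto_nhds_unique (hI' (fun x => φ x j) ((continuous_apply j).comp hφ)) ?_
  refine ((tendsto_pi_nhds.1 hv j).mono_left hU).congr fun i => ?_
  simp [birkhoffAverage, birkhoffSum, cocycle]

/-- If the pointwise rotation set is convex then the measure, pointwise,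
and Misiurewicz–Ziemian rotation sets all coincide. -/
theorem stmt1 {Z : Type*} [MetricSpace Z] [CompactSpace Z] [MeasurableSpace Z] [BorelSpace Z]
    {k : ℕ} (g : Z → Z) (hg : Continuous g) (φ : Z → Fin k → ℝ) (hφ : Continuous φ)
    (hconv : Convex ℝ (rotP g φ)) :
    rotM g φ = rotP g φ ∧ rotP g φ = rotMZ g φ := by
  have h1 := aux_M_sub_P g hg φ hφ hconv
  have h2 := aux_MZ_sub_M g hg φ hφ
  have h3 : rotP g φ ⊆ rotMZ g φ := by
    rintro v ⟨z, hz⟩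
    exact ⟨fun _ => z, fun i => i, tendsto_id, hz⟩
  exact ⟨h1.antisymm (h3.trans h2), h3.antisymm (h2.trans h1)⟩
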